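/- Let U ⊆ ℝ³ be open and connected and let ψ : U → ℝ³ be smooth with invertible derivative Dψ(x) at every point. Set b(x) = Dψ(x)⁻¹ (Dψ(x)⁻¹)ᵀ and c(x) = b(x)⁻¹ = Dψ(x)ᵀ Dψ(x). If the principal invariants I₁ = tr b, I₂ = ((tr b)² − tr(b²))/2, and I₃ = det b are each constant on U and div b = 0 and div c = 0 on U, then Dψ is constant on U, i.e., the deformation is homogeneous (Ericksen's theorem for compressible isotropic solids). -/

import Mathlib

open Matrix

/-- The Jacobian matrix (derivative) of a map `ψ : ℝ³ → ℝ³` at a point. -/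
noncomputable def jac (ψ : (Fin 3 → ℝ) → (Fin 3 → ℝ)) (x : Fin 3 → ℝ) :
    Matrix (Fin 3) (Fin 3) ℝ :=
  fun i j => fderiv ℝ ψ x (Pi.single j 1) i

/-- Divergence of a matrix field: `(div T)_i = Σ_j ∂T_{ij}/∂x_j`. -/
noncomputable def mdiv (T : (Fin 3 → ℝ) → Matrix (Fin 3) (Fin 3) ℝ) (x : Fin 3 → ℝ) :
    Fin 3 → ℝ :=
  fun i => ∑ j, fderiv ℝ (fun y => T y i j) x (Pi.single j 1)

/-- Left Cauchy–Green tensor `b = F Fᵀ` with `F = (Dψ)⁻¹`. -/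
noncomputable def bField (ψ : (Fin 3 → ℝ) → (Fin 3 → ℝ)) (x : Fin 3 → ℝ) :
    Matrix (Fin 3) (Fin 3) ℝ :=
  (jac ψ x)⁻¹ * ((jac ψ x)⁻¹)ᵀ

/-- `c = b⁻¹ = Dψᵀ Dψ`. -/
noncomputable def cField (ψ : (Fin 3 → ℝ) → (Fin 3 → ℝ)) (x : Fin 3 → ℝ) :
    Matrix (Fin 3) (Fin 3) ℝ :=
  (jac ψ x)ᵀ * jac ψ x

/-- The ten invariants of the pair `(b, σ̊)`. -/
noncomputable def invariants (b σ : Matrix (Fin 3) (Fin 3) ℝ) : Fin 10 → ℝ :=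
  ![b.trace, (b.trace ^ 2 - (b * b).trace) / 2, b.det,
    σ.trace, (σ * σ).trace, (σ * σ * σ).trace,
    (b * σ).trace, (b * b * σ).trace, (b * σ * σ).trace, (b * b * σ * σ).trace]

/-- The Cauchy stress built from response functions `α₀,…,α₇` and tensors `b`, `c`, `σ̊`. -/
noncomputable def cauchyStress (α : Fin 8 → (Fin 10 → ℝ) → ℝ)
    (b c σ : Matrix (Fin 3) (Fin 3) ℝ) : Matrix (Fin 3) (Fin 3) ℝ :=
  α 0 (invariants b σ) • (1 : Matrix (Fin 3) (Fin 3) ℝ)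
    + α 1 (invariants b σ) • b + α 2 (invariants b σ) • c
    + α 3 (invariants b σ) • σ + α 4 (invariants b σ) • (σ * σ)
    + α 5 (invariants b σ) • (b * σ + σ * b)
    + α 6 (invariants b σ) • (c * σ + σ * c)
    + α 7 (invariants b σ) • (b * σ * σ + σ * σ * b)

/-- `(ψ, σ̊)` is universal: for all smooth response functions, the Cauchy stress is
divergence-free on `U`. -/
def IsUniversal (U : Set (Fin 3 → ℝ)) (ψ : (Fin 3 → ℝ) → (Fin 3 → ℝ))
    (σ0 : (Fin 3 → ℝ) → Matrix (Fin 3) (Fin 3) ℝ) : Prop :=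
  ∀ α : Fin 8 → (Fin 10 → ℝ) → ℝ, (∀ i, ContDiff ℝ (⊤ : ℕ∞) (α i)) →
    ∀ x ∈ U, mdiv (fun y => cauchyStress α (bField ψ y) (cField ψ y) (σ0 y)) x = 0


/-- Partial derivative of a scalar field. -/
noncomputable def pdv (j : Fin 3) (f : (Fin 3 → ℝ) → ℝ) (x : Fin 3 → ℝ) : ℝ :=
  fderiv ℝ f x (Pi.single j 1)

/-- Smooth scalar field on `U`. -/
def SmU (U : Set (Fin 3 → ℝ)) (f : (Fin 3 → ℝ) → ℝ) : Prop := ContDiffOn ℝ (⊤ : ℕ∞) f U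

lemma SmU.at {U : Set (Fin 3 → ℝ)} (hU : IsOpen U) {f : (Fin 3 → ℝ) → ℝ} (hf : SmU U f)
    {x : Fin 3 → ℝ} (hx : x ∈ U) : ContDiffAt ℝ (⊤ : ℕ∞) f x :=
  ContDiffOn.contDiffAt hf (hU.mem_nhds hx)

lemma SmU.diff {U : Set (Fin 3 → ℝ)} (hU : IsOpen U) {f : (Fin 3 → ℝ) → ℝ} (hf : SmU U f)
    {x : Fin 3 → ℝ} (hx : x ∈ U) : DifferentiableAt ℝ f x :=
  (SmU.at hU hf hx).differentiableAt (by simp)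

lemma SmU.pdv {U : Set (Fin 3 → ℝ)} (hU : IsOpen U) {f : (Fin 3 → ℝ) → ℝ} (hf : SmU U f)
    (j : Fin 3) : SmU U (pdv j f) := by
  have h : ContDiffOn ℝ (⊤ : ℕ∞) (fderiv ℝ f) U :=
    ContDiffOn.fderiv_of_isOpen hf hU (by simp)
  exact h.clm_apply contDiffOn_const

lemma SmU.mul {U : Set (Fin 3 → ℝ)} {f g : (Fin 3 → ℝ) → ℝ} (hf : SmU U f)
    (hg : SmU U g) : SmU U (fun y => f y * g y) := ContDiffOn.mul hf hg

lemma SmU.sum {U : Set (Fin 3 → ℝ)} {f : Fin 3 → (Fin 3 → ℝ) → ℝ} (hf : ∀ i, SmU U (f i)) :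
    SmU U (fun y => ∑ i, f i y) := ContDiffOn.sum (fun i _ => hf i)

lemma pdv_congr {U : Set (Fin 3 → ℝ)} (hU : IsOpen U) {f g : (Fin 3 → ℝ) → ℝ}
    (h : ∀ x ∈ U, f x = g x) (j : Fin 3) {x : Fin 3 → ℝ} (hx : x ∈ U) :
    pdv j f x = pdv j g x := by
  have : f =ᶠ[nhds x] g := Filter.eventually_of_mem (hU.mem_nhds hx) h
  unfold pdv
  rw [this.fderiv_eq]

lemma pdv_const (c : ℝ) (j : Fin 3) (x : Fin 3 → ℝ) : pdv j (fun _ => c) x = 0 := by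
  simp [pdv]

lemma pdv_mul {U : Set (Fin 3 → ℝ)} (hU : IsOpen U) {f g : (Fin 3 → ℝ) → ℝ} (hf : SmU U f)
    (hg : SmU U g) (j : Fin 3) {x : Fin 3 → ℝ} (hx : x ∈ U) :
    pdv j (fun y => f y * g y) x = pdv j f x * g x + f x * pdv j g x := by
  unfold pdv
  rw [fderiv_fun_mul (hf.diff hU hx) (hg.diff hU hx)]
  simp
  ring

lemma pdv_sum {U : Set (Fin 3 → ℝ)} (hU : IsOpen U) {f : Fin 3 → (Fin 3 → ℝ) → ℝ}
    (hf : ∀ i, SmU U (f i)) (j : Fin 3) {x : Fin 3 → ℝ} (hx : x ∈ U) :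
    pdv j (fun y => ∑ i, f i y) x = ∑ i, pdv j (f i) x := by
  unfold pdv
  rw [fderiv_fun_sum (fun i _ => (hf i).diff hU hx)]
  simp

lemma pdv_comm {U : Set (Fin 3 → ℝ)} (hU : IsOpen U) {f : (Fin 3 → ℝ) → ℝ} (hf : SmU U f)
    (i j : Fin 3) {x : Fin 3 → ℝ} (hx : x ∈ U) :
    pdv i (pdv j f) x = pdv j (pdv i f) x := by
  have hs : IsSymmSndFDerivAt ℝ f x := (hf.at hU hx).isSymmSndFDerivAt (by
    simp only [minSmoothness_of_isRCLikeNormedField]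
    exact WithTop.coe_le_coe.2 (le_top (a := (2 : ℕ∞))))
  have hd : DifferentiableAt ℝ (fderiv ℝ f) x := by
    have h : ContDiffOn ℝ (⊤ : ℕ∞) (fderiv ℝ f) U :=
      ContDiffOn.fderiv_of_isOpen hf hU (by simp)
    exact (h.contDiffAt (hU.mem_nhds hx)).differentiableAt (by simp)
  have key : ∀ k l : Fin 3, pdv k (pdv l f) x
      = fderiv ℝ (fderiv ℝ f) x (Pi.single k 1) (Pi.single l 1) := by
    intro k l
    unfold pdv
    rw [fderiv_clm_apply hd (differentiableAt_const _)]
    simp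
  rw [key, key]
  exact hs _ _

lemma trace_adj (b : Matrix (Fin 3) (Fin 3) ℝ) :
    b.adjugate.trace = (b.trace ^ 2 - (b * b).trace) / 2 := by
  rw [Matrix.adjugate_fin_three]
  simp [Matrix.trace, Fin.sum_univ_three, Matrix.mul_apply]
  ring

lemma trace_c (A : Matrix (Fin 3) (Fin 3) ℝ) (hA : A.det ≠ 0) :
    (A⁻¹ * (A⁻¹)ᵀ).det * (Aᵀ * A).trace
      = ((A⁻¹ * (A⁻¹)ᵀ).trace ^ 2 - ((A⁻¹ * (A⁻¹)ᵀ) * (A⁻¹ * (A⁻¹)ᵀ)).trace) / 2 := by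
  have hu : IsUnit A.det := isUnit_iff_ne_zero.mpr hA
  have hbc : (A⁻¹ * (A⁻¹)ᵀ) * (Aᵀ * A) = 1 := by
    rw [Matrix.mul_assoc, ← Matrix.mul_assoc (A⁻¹)ᵀ, ← Matrix.transpose_mul,
      Matrix.mul_nonsing_inv _ hu]
    simp [Matrix.nonsing_inv_mul _ hu]
  rw [← trace_adj]
  generalize A⁻¹ * (A⁻¹)ᵀ = b at *
  have : b.adjugate = b.det • (Aᵀ * A) := by
    calc b.adjugate = b.adjugate * (b * (Aᵀ * A)) := by rw [hbc, Matrix.mul_one]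
      _ = (b.adjugate * b) * (Aᵀ * A) := by rw [Matrix.mul_assoc]
      _ = _ := by rw [Matrix.adjugate_mul]; simp
  rw [this, Matrix.trace_smul, smul_eq_mul]

/-- Ericksen's theorem for compressible isotropic solids. If the
principal invariants of `b` are constant on an open connected `U ⊆ ℝ³` and
`div b = div c = 0`, then `Dψ` is constant, i.e., the deformation is homogeneous. -/
theorem ericksen_compressible
    (U : Set (Fin 3 → ℝ)) (hUopen : IsOpen U) (hUconn : IsConnected U)
    (ψ : (Fin 3 → ℝ) → (Fin 3 → ℝ)) (hψ : ContDiffOn ℝ (⊤ : ℕ∞) ψ U)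
    (hinv : ∀ x ∈ U, (jac ψ x).det ≠ 0)
    (hI1 : ∀ x ∈ U, ∀ y ∈ U, (bField ψ x).trace = (bField ψ y).trace)
    (hI2 : ∀ x ∈ U, ∀ y ∈ U,
      ((bField ψ x).trace ^ 2 - (bField ψ x * bField ψ x).trace) / 2
        = ((bField ψ y).trace ^ 2 - (bField ψ y * bField ψ y).trace) / 2)
    (hI3 : ∀ x ∈ U, ∀ y ∈ U, (bField ψ x).det = (bField ψ y).det)
    (hdivb : ∀ x ∈ U, mdiv (fun y => bField ψ y) x = 0)
    (hdivc : ∀ x ∈ U, mdiv (fun y => cField ψ y) x = 0) :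
    ∀ x ∈ U, ∀ y ∈ U, jac ψ x = jac ψ y := by
  classical
  set J : Fin 3 → Fin 3 → (Fin 3 → ℝ) → ℝ := fun a i y => jac ψ y a i with hJ
  have hψa : ∀ a, SmU U (fun y => ψ y a) := fun a => (contDiffOn_pi.1 hψ) a
  have hJp : ∀ a i, ∀ x ∈ U, J a i x = pdv i (fun y => ψ y a) x := by
    intro a i x hx
    have hd : DifferentiableAt ℝ ψ x :=
      (hψ.contDiffAt (hUopen.mem_nhds hx)).differentiableAt (by simp)
    simp only [hJ, jac, pdv]
    rw [fderiv_apply hd]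
    rfl
  have hJs : ∀ a i, SmU U (J a i) := fun a i =>
    ContDiffOn.congr ((hψa a).pdv hUopen i) (hJp a i)
  have hsym : ∀ a i j, ∀ x ∈ U, pdv j (J a i) x = pdv i (J a j) x := by
    intro a i j x hx
    rw [pdv_congr hUopen (hJp a i) j hx, pdv_congr hUopen (hJp a j) i hx]
    exact pdv_comm hUopen (hψa a) j i hx
  -- trace of `c` is constant
  obtain ⟨x0, hx0⟩ := hUconn.nonempty
  have htr : ∀ x ∈ U, (∑ a, ∑ i, J a i x * J a i x) = (cField ψ x0).trace := by
    intro x hx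
    have h1 : (cField ψ x).trace = (cField ψ x0).trace := by
      have e1 := trace_c _ (hinv x hx)
      have e2 := trace_c _ (hinv x0 hx0)
      have e3 := hI2 x hx x0 hx0
      have e4 := hI3 x hx x0 hx0
      unfold bField at e3 e4
      rw [e3, ← e2, e4] at e1
      refine mul_left_cancel₀ ?_ e1
      have hd := hinv x0 hx0
      rw [Matrix.det_mul, Matrix.det_transpose, Matrix.det_nonsing_inv]
      simpa using hd
    rw [← h1]
    simp only [cField, Matrix.trace, Matrix.diag, Matrix.mul_apply, Matrix.transpose_apply, hJ]
    rw [Finset.sum_comm]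
  -- first derivative
  have hD1 : ∀ k, ∀ x ∈ U, (∑ a, ∑ i, J a i x * pdv k (J a i) x) = 0 := by
    intro k x hx
    have h := pdv_congr hUopen htr k hx
    rw [pdv_const, pdv_sum hUopen (fun a => SmU.sum fun i => (hJs a i).mul (hJs a i)) k hx] at h
    simp only [pdv_sum hUopen (fun i => (hJs _ i).mul (hJs _ i)) k hx,
      pdv_mul hUopen (hJs _ _) (hJs _ _) k hx] at h
    have h2 : (2 : ℝ) * (∑ a, ∑ i, J a i x * pdv k (J a i) x) = 0 := by
      rw [← h]
      simp only [Finset.mul_sum]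
      refine Finset.sum_congr rfl fun a _ => Finset.sum_congr rfl fun i _ => ?_
      ring
    linarith
  have hL : ∀ a, ∀ x ∈ U, (∑ j, pdv j (J a j) x) = 0 := by
    intro a x hx
    have hv : (jac ψ x)ᵀ *ᵥ (fun a => ∑ j, pdv j (J a j) x) = 0 := by
      funext i
      have h := congrFun (hdivc x hx) i
      change (∑ j, pdv j (fun y => ∑ a, J a i y * J a j y) x) = 0 at h
      simp only [pdv_sum hUopen (fun a => (hJs a _).mul (hJs a _)) _ hx,
        pdv_mul hUopen (hJs _ _) (hJs _ _) _ hx] at h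
      have h1 := hD1 i x hx
      have h2 : ∀ a j, pdv j (J a i) x = pdv i (J a j) x := fun a j => hsym a i j x hx
      simp only [h2] at h
      change (∑ a, J a i x * ∑ j, pdv j (J a j) x) = 0
      simp only [Fin.sum_univ_three] at h h1 ⊢
      linarith
    have hdet : ((jac ψ x)ᵀ).det ≠ 0 := by
      rw [Matrix.det_transpose]; exact hinv x hx
    exact congrFun (Matrix.eq_zero_of_mulVec_eq_zero hdet hv) a
  have hLJ : ∀ a i, ∀ x ∈ U, (∑ k, pdv k (pdv k (J a i)) x) = 0 := by
    intro a i x hx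
    have h := pdv_congr hUopen (hL a) i hx
    rw [pdv_const, pdv_sum hUopen (fun j => (hJs a j).pdv hUopen j) i hx] at h
    rw [← h]
    refine Finset.sum_congr rfl fun k _ => ?_
    rw [pdv_congr hUopen (hsym a i k) k hx]
    exact pdv_comm hUopen (hJs a k) k i hx
  have hD2 : ∀ k, ∀ x ∈ U, (∑ a, ∑ i, (pdv k (J a i) x * pdv k (J a i) x
      + J a i x * pdv k (pdv k (J a i)) x)) = 0 := by
    intro k x hx
    have h := pdv_congr hUopen (hD1 k) k hx
    rw [pdv_const, pdv_sum hUopen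
      (fun a => SmU.sum fun i => (hJs a i).mul ((hJs a i).pdv hUopen k)) k hx] at h
    simpa only [pdv_sum hUopen (fun i => (hJs _ i).mul ((hJs _ i).pdv hUopen k)) k hx,
      pdv_mul hUopen (hJs _ _) ((hJs _ _).pdv hUopen k) k hx] using h
  have hzero : ∀ a i k, ∀ x ∈ U, pdv k (J a i) x = 0 := by
    intro a i k x hx
    have hs : (∑ k, ∑ a, ∑ i, pdv k (J a i) x ^ 2) = 0 := by
      have h0 : (∑ a, ∑ i, J a i x * ∑ k, pdv k (pdv k (J a i)) x) = 0 := by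
        simp only [hLJ _ _ x hx, mul_zero, Finset.sum_const_zero]
      have h1 : (∑ k, ∑ a, ∑ i, (pdv k (J a i) x * pdv k (J a i) x
          + J a i x * pdv k (pdv k (J a i)) x)) = 0 :=
        Finset.sum_eq_zero fun k _ => hD2 k x hx
      simp only [Fin.sum_univ_three] at h0 h1 ⊢
      linarith
    rw [Finset.sum_eq_zero_iff_of_nonneg (fun _ _ => by positivity)] at hs
    have hs := hs k (Finset.mem_univ _)
    rw [Finset.sum_eq_zero_iff_of_nonneg (fun _ _ => by positivity)] at hs
    have hs := hs a (Finset.mem_univ _)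
    rw [Finset.sum_eq_zero_iff_of_nonneg (fun _ _ => by positivity)] at hs
    exact pow_eq_zero_iff (two_ne_zero) |>.1 (hs i (Finset.mem_univ _))
  intro x hx y hy
  ext a i
  refine hUopen.is_const_of_fderiv_eq_zero (𝕜 := ℝ) (f := J a i) hUconn.isPreconnected
    (fun z hz => ((hJs a i).diff hUopen hz).differentiableWithinAt) ?_ hx hy
  intro z hz
  refine ContinuousLinearMap.coe_injective ?_
  refine LinearMap.pi_ext' fun k => ?_
  ext
  simpa [pdv] using hzero a i k z hz
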